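/- Let T be a tree of order n. Then IC(T) = n − 1 if and only if T is isomorphic to one of the following: the path P_5, the path P_6, the double star S_{1,2}, or the star K_{1,3}. -/

import Mathlib

namespace ICNL

variable {V : Type*}

/-- `S` is a dominating set of `G`. -/
def Dominating (G : SimpleGraph V) (S : Set V) : Prop :=
  ∀ v : V, v ∈ S ∨ ∃ u ∈ S, G.Adj u v

/-- `S` is an independent set of `G`. -/
def IndepSet (G : SimpleGraph V) (S : Set V) : Prop :=
  ∀ ⦃u : V⦄, u ∈ S → ∀ ⦃v : V⦄, v ∈ S → ¬ G.Adj u v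

/-- `S` is an independent dominating set of `G`. -/
def IndepDom (G : SimpleGraph V) (S : Set V) : Prop :=
  IndepSet G S ∧ Dominating G S

/-- `A` and `B` form an independent coalition in `G`. -/
def ICCoalition (G : SimpleGraph V) (A B : Set V) : Prop :=
  Disjoint A B ∧ IndepSet G A ∧ IndepSet G B ∧
    ¬ IndepDom G A ∧ ¬ IndepDom G B ∧ IndepDom G (A ∪ B)

/-- `π` is a partition of the vertex set into nonempty classes. -/
def IsPartition (π : Finset (Finset V)) : Prop :=
  (∀ A ∈ π, A.Nonempty) ∧ ∀ v : V, ∃! A : Finset V, A ∈ π ∧ v ∈ A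

/-- `π` is an independent coalition partition of `G`. -/
def IsICPartition (G : SimpleGraph V) (π : Finset (Finset V)) : Prop :=
  IsPartition π ∧
    ∀ A ∈ π, (∃ v : V, (A : Set V) = {v} ∧ Dominating G (A : Set V)) ∨
      (¬ IndepDom G (A : Set V) ∧
        ∃ B ∈ π, B ≠ A ∧ ICCoalition G (A : Set V) (B : Set V))

/-- The independent coalition number: the maximum number of classes of an
ic-partition of `G`. -/
noncomputable def IC (G : SimpleGraph V) : ℕ :=
  sSup {k | ∃ π : Finset (Finset V), IsICPartition G π ∧ π.card = k}


/-- The star graph `K_{1,n-1}` on `n` vertices. -/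
def starGraph (n : ℕ) : SimpleGraph (Fin n) :=
  SimpleGraph.fromRel (fun u _ => (u : ℕ) = 0)

/-- The double star `S_{p,q}`: the two support vertices `Sum.inr (Sum.inr 0)` and
`Sum.inr (Sum.inr 1)` are adjacent, the `p` leaves `Sum.inl i` are adjacent to the
first support vertex, and the `q` leaves `Sum.inr (Sum.inl j)` are adjacent to the
second support vertex. -/
def doubleStar (p q : ℕ) : SimpleGraph (Fin p ⊕ Fin q ⊕ Fin 2) :=
  SimpleGraph.fromRel (fun u v =>
    (u = Sum.inr (Sum.inr 0) ∧ v = Sum.inr (Sum.inr 1)) ∨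
    ((∃ i : Fin p, u = Sum.inl i) ∧ v = Sum.inr (Sum.inr 0)) ∨
    ((∃ j : Fin q, u = Sum.inr (Sum.inl j)) ∧ v = Sum.inr (Sum.inr 1)))


def domB (n : ℕ) (G : ℕ → ℕ → Bool) (L : List ℕ) : Bool :=
  (List.range n).all fun v => L.any fun u => u == v || G u v

def indB (G : ℕ → ℕ → Bool) (L : List ℕ) : Bool :=
  L.all fun u => L.all fun v => !(G u v)

def idsB (n : ℕ) (G : ℕ → ℕ → Bool) (L : List ℕ) : Bool := indB G L && domB n G L

def QB (n : ℕ) (G : ℕ → ℕ → Bool) (x y : ℕ) : Bool :=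
  x != y && !(idsB n G [x, y]) &&
  ((List.range n).any fun z => z != x && z != y && idsB n G [x, y, z]) &&
  ((List.range n).all fun z => z == x || z == y || domB n G [z] || idsB n G [x, y, z] ||
    ((List.range n).any fun w => w != x && w != y && idsB n G [z, w]))

def RB (n : ℕ) (G : ℕ → ℕ → Bool) : Bool :=
  (List.range n).all fun z => domB n G [z] || (List.range n).any fun w => idsB n G [z, w]

def existsQB (n : ℕ) (G : ℕ → ℕ → Bool) : Bool :=
  (List.range n).any fun x => (List.range n).any fun y => QB n G x y

def treeB (p : ℕ → ℕ) (i j : ℕ) : Bool :=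
  (Nat.blt i j && p j == i) || (Nat.blt j i && p i == j)

def pathB (i j : ℕ) : Bool := i + 1 == j || j + 1 == i
def starB (i j : ℕ) : Bool := (i == 0 || j == 0) && i != j
/-- double star: 0 leaf of 3; 1,2 leaves of 4; 3,4 adjacent. -/
def dsB (i j : ℕ) : Bool :=
  (i == 3 && j == 4) || (i == 4 && j == 3) || (i == 0 && j == 3) || (i == 3 && j == 0) ||
  ((i == 1 || i == 2) && j == 4) || (i == 4 && (j == 1 || j == 2))

def search (n : ℕ) (G H : ℕ → ℕ → Bool) : ℕ → List ℕ → List (List ℕ)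
  | 0, L => [L]
  | k+1, L => (List.range n).flatMap fun c =>
      if L.all fun d => d != c then
       (if (List.range L.length).all fun i => G (L.getD i 0) c == H i L.length then
        search n G H k (L ++ [c]) else []) else []

def checkIso (n : ℕ) (G H : ℕ → ℕ → Bool) (L : List ℕ) : Bool :=
  ((List.range n).all fun i => Nat.blt (L.getD i 0) n) &&
  ((List.range n).all fun i => (List.range n).all fun j =>
    (i == j || L.getD i 0 != L.getD j 0) && G (L.getD i 0) (L.getD j 0) == H i j)

def isoB (n : ℕ) (G H : ℕ → ℕ → Bool) : Bool := (search n G H n []).any (checkIso n G H)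

def pf (a b c d : ℕ) (j : ℕ) : ℕ := [0, 0, a, b, c, d].getD j 0

def Q (T : SimpleGraph V) (x y : V) : Prop :=
  x ≠ y ∧ ¬ IndepDom T {x, y} ∧ (∃ z, z ≠ x ∧ z ≠ y ∧ IndepDom T {x, y, z}) ∧
  ∀ z, z ≠ x → z ≠ y → Dominating T {z} ∨ IndepDom T {x, y, z} ∨
    ∃ w, w ≠ x ∧ w ≠ y ∧ IndepDom T {z, w}

def R (T : SimpleGraph V) : Prop := ∀ z, Dominating T {z} ∨ ∃ w, IndepDom T {z, w}

section transfer
variable {n : ℕ} {T : SimpleGraph V} {G : ℕ → ℕ → Bool} (e : V ≃ Fin n)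
  (hG : ∀ u v, T.Adj u v ↔ G (e u) (e v) = true)
include e hG

theorem dom_iff (L : List V) :
    Dominating T {v | v ∈ L} ↔ domB n G (L.map fun v => (e v : ℕ)) = true := by
  simp only [Dominating, domB, List.all_eq_true, List.any_eq_true, List.mem_range, List.mem_map,
    Bool.or_eq_true, beq_iff_eq, Set.mem_ofPred_eq]
  constructor
  · intro h v hv
    have := h (e.symm ⟨v, hv⟩)
    rcases this with h | ⟨u, hu, h⟩
    · exact ⟨v, ⟨_, h, by simp⟩, Or.inl rfl⟩
    · refine ⟨_, ⟨u, hu, rfl⟩, Or.inr ?_⟩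
      simpa using (hG _ _).1 h
  · intro h v
    obtain ⟨_, ⟨u, hu, rfl⟩, h⟩ := h (e v) (e v).2
    rcases h with h | h
    · left
      have : u = v := e.injective (Fin.ext h)
      exact this ▸ hu
    · exact Or.inr ⟨u, hu, (hG _ _).2 h⟩

theorem ind_iff (L : List V) :
    IndepSet T {v | v ∈ L} ↔ indB G (L.map fun v => (e v : ℕ)) = true := by
  simp [IndepSet, indB, hG]

theorem ids_iff (L : List V) :
    IndepDom T {v | v ∈ L} ↔ idsB n G (L.map fun v => (e v : ℕ)) = true := by
  simp [IndepDom, idsB, ← dom_iff e hG, ← ind_iff e hG]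

theorem dom1 (x : V) : Dominating T {x} ↔ domB n G [(e x : ℕ)] = true := by
  have := dom_iff e hG [x]
  simpa [Set.insert_def] using this

theorem ids2 (x y : V) : IndepDom T {x, y} ↔ idsB n G [(e x : ℕ), (e y : ℕ)] = true := by
  have := ids_iff e hG [x, y]
  simpa [Set.insert_def] using this

theorem ids3 (x y z : V) :
    IndepDom T {x, y, z} ↔ idsB n G [(e x : ℕ), (e y : ℕ), (e z : ℕ)] = true := by
  have := ids_iff e hG [x, y, z]
  simpa [Set.insert_def] using this

omit hG in
theorem all_iff (P : ℕ → Bool) : (List.range n).all P = true ↔ ∀ v : V, P (e v) = true := by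
  simp only [List.all_eq_true, List.mem_range]
  exact ⟨fun h v => h _ (e v).2, fun h i hi => by simpa using h (e.symm ⟨i, hi⟩)⟩

omit hG in
theorem any_iff (P : ℕ → Bool) : (List.range n).any P = true ↔ ∃ v : V, P (e v) = true := by
  simp only [List.any_eq_true, List.mem_range]
  exact ⟨fun ⟨i, hi, h⟩ => ⟨e.symm ⟨i, hi⟩, by simpa using h⟩, fun ⟨v, h⟩ => ⟨_, (e v).2, h⟩⟩

omit hG in
theorem ne_iff' (x y : V) : ((e x : ℕ) != (e y : ℕ)) = true ↔ x ≠ y := by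
  simp [Fin.ext_iff.symm]

theorem Q_iff (x y : V) : Q T x y ↔ QB n G (e x) (e y) = true := by
  simp only [QB, Bool.and_eq_true, all_iff e, any_iff e, ne_iff', ← ids3 e hG, ← ids2 e hG,
    ← dom1 e hG, Q, Bool.or_eq_true, beq_iff_eq, Fin.ext_iff.symm, e.injective.eq_iff,
    Bool.not_eq_true', Bool.eq_false_iff, ne_eq]
  constructor
  · rintro ⟨h1, h2, ⟨z, hz⟩, h4⟩
    refine ⟨⟨⟨h1, h2⟩, z, by tauto⟩, fun z => ?_⟩
    have := h4 z
    simp only [and_assoc]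
    tauto
  · rintro ⟨⟨⟨h1, h2⟩, z, hz⟩, h4⟩
    refine ⟨h1, h2, ⟨z, by tauto⟩, fun z => ?_⟩
    have := h4 z
    simp only [and_assoc] at this
    tauto

theorem exQ_iff : (∃ x y, Q T x y) ↔ existsQB n G = true := by
  simp only [existsQB, any_iff e, Q_iff e hG]

theorem R_iff : R T ↔ RB n G = true := by
  simp only [RB, all_iff e, any_iff e, R, Bool.or_eq_true, ← dom1 e hG, ← ids2 e hG]

theorem iso_of_isoB {H : SimpleGraph (Fin n)} {Hb : ℕ → ℕ → Bool}
    (hH : ∀ i j : Fin n, H.Adj i j ↔ Hb i j = true) (h : isoB n G Hb = true) :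
    Nonempty (T ≃g H) := by
  simp only [isoB, List.any_eq_true] at h
  obtain ⟨L, -, h⟩ := h
  simp only [checkIso, Bool.and_eq_true, List.all_eq_true, List.mem_range, Bool.or_eq_true,
    beq_iff_eq, bne_iff_ne, Nat.blt_eq] at h
  obtain ⟨h1, h2⟩ := h
  let g : Fin n → Fin n := fun i => ⟨L.getD i 0, h1 i i.2⟩
  have hinj : Function.Injective g := by
    intro i j hij
    have := (h2 i i.2 j j.2).1
    rcases this with h | h
    · exact Fin.ext h
    · exact absurd (Fin.ext_iff.1 hij) h
  let g' : Fin n ≃ Fin n := Equiv.ofBijective g (Finite.injective_iff_bijective.1 hinj)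
  have key : ∀ i j, T.Adj (e.symm (g' i)) (e.symm (g' j)) ↔ H.Adj i j := by
    intro i j
    rw [hG, hH, ← (h2 i i.2 j j.2).2]
    simp [g', g]
  exact ⟨(show H ≃g T from ⟨g'.trans e.symm, by intro a b; exact key a b⟩).symm⟩

end transfer

section part
variable [Fintype V] {π : Finset (Finset V)}

theorem part_sum (h : IsPartition π) : ∑ A ∈ π, A.card = Fintype.card V := by
  classical
  have hd : (π : Set (Finset V)).PairwiseDisjoint id := by
    intro A hA B hB hAB
    rw [Function.onFun, Finset.disjoint_left]
    intro v hv hv'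
    exact hAB ((h.2 v).unique ⟨hA, hv⟩ ⟨hB, hv'⟩)
  have := Finset.card_biUnion (s := π) (t := id) (fun A hA B hB hAB => hd hA hB hAB)
  simp only [id] at this
  rw [← this, ← Finset.card_univ]
  congr 1
  ext v
  obtain ⟨A, hA, -⟩ := h.2 v
  simp only [Finset.mem_biUnion, Finset.mem_univ, iff_true]
  exact ⟨A, hA⟩

theorem part_card_le (h : IsPartition π) : π.card ≤ Fintype.card V := by
  rw [← part_sum h, Finset.card_eq_sum_ones]
  exact Finset.sum_le_sum fun A hA => Finset.card_pos.2 (h.1 A hA)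

theorem part_full (h : IsPartition π) (hc : π.card = Fintype.card V) : ∀ A ∈ π, A.card = 1 := by
  have h1 : ∑ A ∈ π, 1 = ∑ A ∈ π, A.card := by
    rw [part_sum h, ← hc]; simp
  have := (Finset.sum_eq_sum_iff_of_le (fun A hA => Finset.card_pos.2 (h.1 A hA))).1 h1
  intro A hA
  exact (this A hA).symm

theorem part_pred (h : IsPartition π) (hc : π.card + 1 = Fintype.card V) :
    ∃ D ∈ π, D.card = 2 ∧ ∀ A ∈ π, A ≠ D → A.card = 1 := by
  classical
  have hs := part_sum h
  have : ∃ D ∈ π, D.card ≠ 1 := by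
    by_contra! hh
    rw [Finset.sum_congr rfl hh] at hs
    simp at hs
    omega
  obtain ⟨D, hD, hD1⟩ := this
  have hD0 := Finset.card_pos.2 (h.1 D hD)
  have h2 := Finset.add_sum_erase π Finset.card hD
  have h3 : ∑ A ∈ π.erase D, 1 ≤ ∑ A ∈ π.erase D, A.card :=
    Finset.sum_le_sum fun A hA => Finset.card_pos.2 (h.1 A (Finset.mem_of_mem_erase hA))
  have h4 : ∑ A ∈ π.erase D, 1 + 1 = π.card := by
    rw [← Finset.card_eq_sum_ones]; exact Finset.card_erase_add_one hD
  have h5 : ∑ A ∈ π.erase D, 1 = ∑ A ∈ π.erase D, A.card := by omega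
  refine ⟨D, hD, by omega, fun A hA hAD => ?_⟩
  have := (Finset.sum_eq_sum_iff_of_le
    (fun A hA => Finset.card_pos.2 (h.1 A (Finset.mem_of_mem_erase hA)))).1 h5
  exact (this A (Finset.mem_erase.2 ⟨hAD, hA⟩)).symm

variable {T : SimpleGraph V}

theorem R_of (h : IsICPartition T π) (hc : π.card = Fintype.card V) : R T := by
  have hf := part_full h.1 hc
  intro z
  obtain ⟨A, ⟨hA, hz⟩, -⟩ := h.1.2 z
  obtain ⟨a, rfl⟩ := Finset.card_eq_one.1 (hf A hA)
  obtain rfl : z = a := by simpa using hz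
  rcases h.2 _ hA with ⟨v, -, hv⟩ | ⟨-, B, hB, -, hc⟩
  · left; simpa using hv
  · right
    obtain ⟨w, rfl⟩ := Finset.card_eq_one.1 (hf B hB)
    refine ⟨w, ?_⟩
    have hc := hc.2.2.2.2.2
    convert hc using 1
    ext t; simp; tauto

theorem Q_of (h : IsICPartition T π) (hc : π.card + 1 = Fintype.card V) : ∃ x y, Q T x y := by
  classical
  obtain ⟨D, hD, hD2, hf⟩ := part_pred h.1 hc
  obtain ⟨x, y, hxy, rfl⟩ := Finset.card_eq_two.1 hD2
  have sing : ∀ A ∈ π, A ≠ {x, y} → ∃ z, z ≠ x ∧ z ≠ y ∧ A = {z} := by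
    intro A hA hAD
    obtain ⟨z, rfl⟩ := Finset.card_eq_one.1 (hf A hA hAD)
    refine ⟨z, ?_, ?_, rfl⟩
    · rintro rfl
      exact hAD ((h.1.2 z).unique ⟨hA, by simp⟩ ⟨hD, by simp⟩)
    · rintro rfl
      exact hAD ((h.1.2 z).unique ⟨hA, by simp⟩ ⟨hD, by simp⟩)
  have hDD : ¬ IndepDom T {x, y} ∧ ∃ z, z ≠ x ∧ z ≠ y ∧ IndepDom T {x, y, z} := by
    rcases h.2 _ hD with ⟨v, hv, -⟩ | ⟨h1, B, hB, hBD, hc⟩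
    · exfalso
      have h1 : x ∈ ({v} : Set V) := by rw [← hv]; simp
      have h2 : y ∈ ({v} : Set V) := by rw [← hv]; simp
      exact hxy (h1.trans h2.symm)
    · refine ⟨by simpa using h1, ?_⟩
      obtain ⟨z, hzx, hzy, rfl⟩ := sing B hB hBD
      refine ⟨z, hzx, hzy, ?_⟩
      have := hc.2.2.2.2.2
      convert this using 1
      ext t; simp; tauto
  refine ⟨x, y, hxy, hDD.1, hDD.2, ?_⟩
  intro z hzx hzy
  obtain ⟨A, ⟨hA, hz⟩, -⟩ := h.1.2 z
  have hAD : A ≠ {x, y} := by rintro rfl; simp at hz; tauto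
  obtain ⟨a, -, -, rfl⟩ := sing A hA hAD
  obtain rfl : z = a := by simpa using hz
  rcases h.2 _ hA with ⟨v, -, hv⟩ | ⟨-, B, hB, -, hc⟩
  · left; simpa using hv
  · right
    have hc := hc.2.2.2.2.2
    by_cases hBD : B = {x, y}
    · left
      subst hBD
      convert hc using 1
      ext t; simp
    · right
      obtain ⟨w, hwx, hwy, rfl⟩ := sing B hB hBD
      refine ⟨w, hwx, hwy, ?_⟩
      convert hc using 1
      ext t; simp; tauto

omit [Fintype V] in
theorem indep_mono {A B : Set V} (hAB : A ⊆ B) (h : IndepSet T B) : IndepSet T A :=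
  fun _ hu _ hv => h (hAB hu) (hAB hv)

theorem part_of_Q {x y : V} (h : Q T x y) :
    ∃ π, IsICPartition T π ∧ π.card + 1 = Fintype.card V := by
  classical
  obtain ⟨hxy, hD, ⟨z0, hz0x, hz0y, hz0⟩, hz⟩ := h
  have hxyne : ∀ z : V, ({z} : Finset V) ≠ {x, y} := by
    intro z hz
    have := congrArg Finset.card hz
    rw [Finset.card_pair hxy] at this
    simp at this
  let S : Finset V := {x, y}ᶜ
  have hS : ∀ z, z ∈ S ↔ z ≠ x ∧ z ≠ y := by intro z; simp [S]
  have set3 : ∀ z, (({x, y} : Finset V) : Set V) ∪ (({z} : Finset V) : Set V) = {x, y, z} := by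
    intro z; ext t; simp; tauto
  -- if `A ∪ {z}` is independent and larger than `{z}` then `{z}` is not dominating
  have nd : ∀ (A : Set V) (z t : V), t ≠ z → t ∈ A → z ∈ A → IndepDom T A →
      ¬ Dominating T {z} := by
    intro A z t htz ht hzA hA hd
    rcases hd t with h | ⟨u, hu, h⟩
    · exact htz h
    · obtain rfl : u = z := hu
      exact hA.1 hzA ht h
  have coal : ∀ z, z ≠ x → z ≠ y → IndepDom T {x, y, z} →
      ICCoalition T (({x, y} : Finset V) : Set V) (({z} : Finset V) : Set V) := by
    intro z hzx hzy h
    refine ⟨?_, ?_, ?_, ?_, ?_, ?_⟩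
    · simp [hzx, hzy]
    · exact indep_mono (by intro t; simp; tauto) h.1
    · exact indep_mono (by intro t; simp; tauto) h.1
    · simpa using hD
    · intro hh
      exact nd _ z x (Ne.symm hzx) (by simp) (by simp) h (by simpa using hh.2)
    · rw [set3]; exact h
  have symm : ∀ A B : Set V, ICCoalition T A B → ICCoalition T B A := by
    rintro A B ⟨a, b, c, d, e, f⟩
    exact ⟨a.symm, c, b, e, d, by rwa [Set.union_comm]⟩
  refine ⟨insert {x, y} (S.image fun z => {z}), ⟨⟨?_, ?_⟩, ?_⟩, ?_⟩
  · intro A hA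
    simp only [Finset.mem_insert, Finset.mem_image] at hA
    rcases hA with rfl | ⟨z, -, rfl⟩ <;> simp
  · intro v
    by_cases hv : v = x ∨ v = y
    · refine ⟨{x, y}, ⟨by simp, by simpa using hv⟩, ?_⟩
      rintro A ⟨hA, hvA⟩
      simp only [Finset.mem_insert, Finset.mem_image] at hA
      rcases hA with rfl | ⟨z, hz, rfl⟩
      · rfl
      · obtain rfl : v = z := by simpa using hvA
        rw [hS] at hz; tauto
    · refine ⟨{v}, ⟨?_, by simp⟩, ?_⟩
      · refine Finset.mem_insert_of_mem (Finset.mem_image_of_mem _ ?_)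
        rw [hS]; tauto
      · rintro A ⟨hA, hvA⟩
        simp only [Finset.mem_insert, Finset.mem_image] at hA
        rcases hA with rfl | ⟨z, hz, rfl⟩
        · simp at hvA; tauto
        · obtain rfl : v = z := by simpa using hvA
          rfl
  · intro A hA
    simp only [Finset.mem_insert, Finset.mem_image] at hA
    rcases hA with rfl | ⟨z, hzS, rfl⟩
    · right
      refine ⟨by simpa using hD, {z0}, ?_, hxyne z0, coal z0 hz0x hz0y hz0⟩
      refine Finset.mem_insert_of_mem (Finset.mem_image_of_mem _ ?_)
      rw [hS]; tauto
    · rw [hS] at hzS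
      by_cases hd : Dominating T {z}
      · left; exact ⟨z, by simp, by simpa using hd⟩
      · right
        refine ⟨fun hh => hd (by simpa using hh.2), ?_⟩
        rcases hz z hzS.1 hzS.2 with h | h | ⟨w, hwx, hwy, h⟩
        · exact absurd h hd
        · exact ⟨{x, y}, by simp, (hxyne z).symm, symm _ _ (coal z hzS.1 hzS.2 h)⟩
        · have hwz : w ≠ z := by
            rintro rfl
            exact hd (by simpa using h.2)
          refine ⟨{w}, ?_, by simpa using hwz, ?_, ?_, ?_, ?_, ?_, ?_⟩
          · refine Finset.mem_insert_of_mem (Finset.mem_image_of_mem _ ?_)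
            rw [hS]; tauto
          · simpa using hwz.symm
          · exact indep_mono (by intro t; simp; tauto) h.1
          · exact indep_mono (by intro t; simp; tauto) h.1
          · intro hh; exact hd (by simpa using hh.2)
          · intro hh
            exact nd _ w z hwz.symm (by simp) (by simp) h (by simpa using hh.2)
          · convert h using 1; ext t; simp; tauto
  · rw [Finset.card_insert_of_notMem, Finset.card_image_of_injective]
    · simp only [S]
      rw [Finset.card_compl, Finset.card_pair hxy]
      have := Finset.card_le_univ ({x, y} : Finset V)
      rw [Finset.card_pair hxy] at this
      omega
    · exact Finset.singleton_injective
    · simp only [Finset.mem_image, not_exists, not_and]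
      exact fun z _ => hxyne z

theorem IC_pred_of (hQ : ∃ x y, Q T x y) (hR : ¬ R T) : IC T = Fintype.card V - 1 := by
  obtain ⟨x, y, hQ⟩ := hQ
  obtain ⟨π, hπ, hc⟩ := part_of_Q hQ
  refine IsGreatest.csSup_eq ⟨⟨π, hπ, by omega⟩, ?_⟩
  rintro k ⟨π', hπ', rfl⟩
  have h1 := part_card_le hπ'.1
  have h2 : π'.card ≠ Fintype.card V := fun h => hR (R_of hπ' h)
  omega

theorem Q_of_IC (h2 : 2 ≤ Fintype.card V) (h : IC T = Fintype.card V - 1) : ∃ x y, Q T x y := by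
  have hne : {k | ∃ π : Finset (Finset V), IsICPartition T π ∧ π.card = k}.Nonempty := by
    by_contra hne
    rw [Set.not_nonempty_iff_eq_empty] at hne
    rw [IC, hne] at h
    simp at h
    omega
  have hb : BddAbove {k | ∃ π : Finset (Finset V), IsICPartition T π ∧ π.card = k} := by
    refine ⟨Fintype.card V, ?_⟩
    rintro k ⟨π', hπ', rfl⟩
    exact part_card_le hπ'.1
  obtain ⟨π, hπ, hc⟩ := Nat.sSup_mem hne hb
  refine Q_of hπ ?_
  rw [IC] at h
  omega

theorem IC_one (h1 : Fintype.card V = 1) : IC T ≠ 0 := by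
  classical
  obtain ⟨v, hv⟩ := Fintype.card_eq_one_iff.1 h1
  have hb : BddAbove {k | ∃ π : Finset (Finset V), IsICPartition T π ∧ π.card = k} := by
    refine ⟨Fintype.card V, ?_⟩
    rintro k ⟨π', hπ', rfl⟩
    exact part_card_le hπ'.1
  have : 1 ≤ IC T := by
    refine le_csSup hb ⟨{{v}}, ⟨⟨by simp, ?_⟩, ?_⟩, by simp⟩
    · intro w
      refine ⟨{v}, by simp [hv w], by simp⟩
    · intro A hA
      left
      rw [Finset.mem_singleton] at hA
      subst hA
      exact ⟨v, by simp, fun w => by simp [hv w]⟩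
  omega
end part

section tree
variable [Fintype V] {T : SimpleGraph V}

omit [Fintype V] in
theorem far_leaf (hT : T.IsTree) {s v a b : V} (hmax : ∀ w, T.dist s w ≤ T.dist s v)
    (ha : T.Adj a v) (hb : T.Adj b v) : a = b := by
  classical
  have key : ∀ a, T.Adj a v → ∃ p : T.Walk s v, p.IsPath ∧ p.penultimate = a := by
    intro a ha
    obtain ⟨p, hp, hl⟩ := hT.connected.exists_path_of_dist s a
    have hv : v ∉ p.support := by
      intro hv
      have h1 := SimpleGraph.dist_le (p.takeUntil v hv)
      have h2 := p.length_takeUntil_lt_length hv ha.ne'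
      have h3 := hmax a
      omega
    exact ⟨p.concat ha, hp.concat hv ha, by simp⟩
  obtain ⟨p, hp, hpa⟩ := key a ha
  obtain ⟨q, hq, hqb⟩ := key b hb
  have := (hT.isAcyclic.subsingleton_path s v).elim ⟨p, hp⟩ ⟨q, hq⟩
  have : p = q := congrArg Subtype.val this
  rw [← hpa, ← hqb, this]

theorem two_leaves (hT : T.IsTree) (h2 : 2 ≤ Fintype.card V) (hd : ∀ c, ¬ Dominating T {c}) :
    ∃ l1 s1 l2 s2, T.Adj l1 s1 ∧ T.Adj l2 s2 ∧ (∀ w, T.Adj l1 w → w = s1) ∧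
      (∀ w, T.Adj l2 w → w = s2) ∧ l1 ≠ l2 ∧ l1 ≠ s2 ∧ s1 ≠ l2 ∧ s1 ≠ s2 := by
  classical
  have : Nontrivial V := Fintype.one_lt_card_iff_nontrivial.1 (by omega)
  obtain ⟨l1, hl1⟩ := hT.exists_vert_degree_one_of_nontrivial
  obtain ⟨s1, h1, h1u⟩ := SimpleGraph.degree_eq_one_iff_existsUnique_adj.1 hl1
  obtain ⟨l2, hl2⟩ := Finite.exists_max (fun w => T.dist s1 w)
  have hne : s1 ≠ l2 ∧ ¬ T.Adj s1 l2 := by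
    have hx := hd s1
    simp only [Dominating, Set.mem_singleton_iff, exists_eq_left, not_forall, not_or] at hx
    obtain ⟨w, hw, hw'⟩ := hx
    have hw1 : T.dist s1 w ≠ 1 := fun h => hw' (SimpleGraph.dist_eq_one_iff_adj.1 h)
    have hw0 : 0 < T.dist s1 w := hT.connected.pos_dist_of_ne (Ne.symm hw)
    have : T.dist s1 w ≤ T.dist s1 l2 := hl2 w
    constructor
    · rintro rfl
      rw [SimpleGraph.dist_self] at this
      omega
    · intro h
      have := SimpleGraph.dist_eq_one_iff_adj.2 h
      omega
  obtain ⟨s2, h2⟩ := hT.preconnected.exists_adj_of_nontrivial l2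
  refine ⟨l1, s1, l2, s2, h1, h2, h1u, fun w hw => far_leaf hT hl2 hw.symm h2.symm, ?_, ?_,
    hne.1, ?_⟩
  · rintro rfl; exact hne.2 h1.symm
  · rintro rfl; exact hne.1 (h1u _ h2.symm).symm
  · rintro rfl; exact hne.2 h2.symm

omit [Fintype V] in
theorem tri_free (hT : T.IsTree) {a b c : V} (h1 : T.Adj a b) (h2 : T.Adj a c) (h3 : T.Adj b c) :
    False := by
  classical
  exact hT.isAcyclic.cliqueFree le_rfl _ (SimpleGraph.is3Clique_triple_iff.2 ⟨h1, h2, h3⟩)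

theorem card_le_six (hT : T.IsTree) {x y : V} (hQ : Q T x y) : Fintype.card V ≤ 6 := by
  classical
  obtain ⟨hxy, hD, ⟨z0, hz0x, hz0y, hz0⟩, hz⟩ := hQ
  by_cases hd : ∃ c, Dominating T {c}
  · obtain ⟨c, hc⟩ := hd
    have hadj : ∀ v, v ≠ c → T.Adj c v := by
      intro v hv
      rcases hc v with h | ⟨u, rfl, h⟩
      · exact absurd h hv
      · exact h
    have hall : (Finset.univ : Finset V) ⊆ {c, x, y, z0} := by
      intro v _
      by_contra hv
      simp only [Finset.mem_insert, Finset.mem_singleton, not_or] at hv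
      obtain ⟨hvc, hvx, hvy, hvz⟩ := hv
      have hcn : c ∉ ({x, y, z0} : Set V) := by
        intro hcm
        by_cases hcx : c = x
        · exact hz0.1 hcm (by simp : y ∈ _) (hadj y (by rw [hcx]; exact hxy.symm))
        · exact hz0.1 hcm (by simp : x ∈ _) (hadj x (Ne.symm hcx))
      rcases hz0.2 v with h | ⟨u, hu, h⟩
      · simp at h; tauto
      · have huc : u ≠ c := by rintro rfl; exact hcn hu
        exact tri_free hT (hadj u huc) (hadj v hvc) h
    have := Finset.card_le_card hall
    rw [Finset.card_univ] at this
    exact this.trans (Finset.card_le_four.trans (by norm_num))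
  · push Not at hd
    have h2 : 2 ≤ Fintype.card V := Fintype.one_lt_card_iff.2 ⟨x, y, hxy⟩
    obtain ⟨l1, s1, l2, s2, a1, a2, u1, u2, n1, n2, n3, n4⟩ := two_leaves hT h2 hd
    have hit1 : ∀ A, IndepDom T A → l1 ∈ A ∨ s1 ∈ A := by
      intro A hA
      rcases hA.2 l1 with h | ⟨u, hu, h⟩
      · exact Or.inl h
      · exact Or.inr (u1 u h.symm ▸ hu)
    have hit2 : ∀ A, IndepDom T A → l2 ∈ A ∨ s2 ∈ A := by
      intro A hA
      rcases hA.2 l2 with h | ⟨u, hu, h⟩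
      · exact Or.inl h
      · exact Or.inr (u2 u h.symm ▸ hu)
    let K : Finset V := {l1, s1, l2, s2}
    let W : Finset V := Finset.univ \ (K ∪ {x, y})
    have hK : K.card ≤ 4 := Finset.card_le_four
    have hW : ∀ v, v ∈ W ↔ (v ≠ l1 ∧ v ≠ s1 ∧ v ≠ l2 ∧ v ≠ s2 ∧ v ≠ x ∧ v ≠ y) := by
      intro v; simp [W, K]; tauto
    have hWQ : ∀ v ∈ W, IndepDom T {x, y, v} := by
      intro v hv
      obtain ⟨b1, b2, b3, b4, b5, b6⟩ := (hW v).1 hv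
      rcases hz v b5 b6 with h | h | ⟨w, -, -, h⟩
      · exact absurd h (hd v)
      · exact h
      · exfalso
        have c1 := hit1 _ h
        have c2 := hit2 _ h
        simp only [Set.mem_insert_iff, Set.mem_singleton_iff] at c1 c2
        grind
    have hcard : Fintype.card V ≤ W.card + (K ∪ {x, y}).card := by
      rw [← Finset.card_univ]
      have := Finset.card_sdiff_add_card (Finset.univ : Finset V) (K ∪ {x, y})
      rw [Finset.union_eq_left.2 (Finset.subset_univ _)] at this
      exact this.ge
    have hxy2 : ({x, y} : Finset V).card ≤ 2 := Finset.card_le_two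
    rcases W.eq_empty_or_nonempty with hE | ⟨v, hv⟩
    · have := Finset.card_union_le K {x, y}
      rw [hE] at hcard
      simp only [Finset.card_empty] at hcard
      omega
    · have hKxy : K ∪ {x, y} = K := by
        rw [Finset.union_eq_left]
        have h := hWQ v hv
        obtain ⟨b1, b2, b3, b4, b5, b6⟩ := (hW v).1 hv
        have c1 := hit1 _ h
        have c2 := hit2 _ h
        simp only [Set.mem_insert_iff, Set.mem_singleton_iff] at c1 c2
        intro t ht
        simp only [K, Finset.mem_insert, Finset.mem_singleton] at ht ⊢
        grind
      rw [hKxy] at hcard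
      have hadj : ∀ a ∈ W, ∀ b ∈ W, a ≠ b → T.Adj a b := by
        intro a ha b hb hab
        have h1 := hWQ a ha
        have h2 := hWQ b hb
        obtain ⟨-, -, -, -, b5, b6⟩ := (hW b).1 hb
        rcases h1.2 b with h | ⟨u, hu, h⟩
        · simp only [Set.mem_insert_iff, Set.mem_singleton_iff] at h
          exfalso; grind
        · simp only [Set.mem_insert_iff, Set.mem_singleton_iff] at hu
          rcases hu with rfl | rfl | rfl
          · exact absurd h (h2.1 (by simp) (by simp))
          · exact absurd h (h2.1 (by simp) (by simp))
          · exact h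
      have : W.card ≤ 2 := by
        by_contra hc
        obtain ⟨a, b, c, ha, hb, hc, hab, hac, hbc⟩ := Finset.two_lt_card_iff.1 (not_le.1 hc)
        exact tri_free hT (hadj a ha b hb hab) (hadj a ha c hc hac) (hadj b hb c hc hbc)
      omega

end tree

theorem treeB_symm (p : ℕ → ℕ) (i j : ℕ) : treeB p i j = treeB p j i := by
  simp [treeB, Bool.or_comm]

theorem encode (n : ℕ) : ∀ {V : Type*} [Fintype V] (T : SimpleGraph V), T.IsTree →
    Fintype.card V = n → ∃ p : ℕ → ℕ, (∀ j, 0 < j → p j < j) ∧ ∃ e : V ≃ Fin n,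
      ∀ u v, T.Adj u v ↔ treeB p (e u) (e v) = true := by
  induction n with
  | zero =>
    intro V _ T hT hc
    have := hT.connected.nonempty
    exact absurd hc Fintype.card_ne_zero
  | succ n ih =>
    intro V _ T hT hc
    classical
    rcases n with _ | n
    · have : Subsingleton V := Fintype.card_le_one_iff_subsingleton.1 hc.le
      refine ⟨fun _ => 0, fun j hj => hj, Fintype.equivFinOfCardEq hc, fun u v => ?_⟩
      have : u = v := Subsingleton.elim _ _
      subst this
      simp [treeB]
    have : Nontrivial V := Fintype.one_lt_card_iff_nontrivial.1 (by omega)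
    obtain ⟨l, hl⟩ := hT.exists_vert_degree_one_of_nontrivial
    have hconn := hT.connected.induce_compl_singleton_of_degree_eq_one hl
    obtain ⟨s, hs, hsu⟩ := SimpleGraph.degree_eq_one_iff_existsUnique_adj.1 hl
    obtain ⟨p, hp, e, he⟩ := ih (T.induce {l}ᶜ) ⟨hconn, hT.isAcyclic.induce _⟩
      (by rw [Fintype.card_compl_set]; simp [hc])
    have hsl : s ∈ ({l}ᶜ : Set V) := hs.ne'
    let f : V → Fin (n + 2) := fun u =>
      if h : u ∈ ({l}ᶜ : Set V) then (e ⟨u, h⟩).castSucc else Fin.last _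
    have fl : f l = Fin.last _ := by simp [f]
    have fu : ∀ u (h : u ∈ ({l}ᶜ : Set V)), f u = (e ⟨u, h⟩).castSucc := by
      intro u h; simp only [f]; rw [dif_pos h]
    have cases' : ∀ u, u = l ∨ u ∈ ({l}ᶜ : Set V) := fun u => by
      by_cases h : u = l
      · exact Or.inl h
      · exact Or.inr h
    have finj : Function.Injective f := by
      intro u v huv
      rcases cases' u with rfl | hu <;> rcases cases' v with rfl | hv
      · rfl
      · rw [fl, fu v hv] at huv
        exact absurd huv.symm (Fin.castSucc_lt_last _).ne
      · rw [fl, fu u hu] at huv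
        exact absurd huv (Fin.castSucc_lt_last _).ne
      · rw [fu u hu, fu v hv] at huv
        have := e.injective (Fin.castSucc_injective _ huv)
        exact congrArg Subtype.val this
    have fbij : Function.Bijective f :=
      (Fintype.bijective_iff_injective_and_card f).2 ⟨finj, by simp [hc]⟩
    let k : ℕ := e ⟨s, hsl⟩
    have hk : k < n + 1 := (e ⟨s, hsl⟩).2
    have hlast : ∀ v (h : v ∈ ({l}ᶜ : Set V)),
        T.Adj l v ↔ treeB (Function.update p (n + 1) k) (f l) (f v) = true := by
      intro v h
      rw [fl, fu v h]
      have hlt := (e ⟨v, h⟩).2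
      have e1 : T.Adj l v ↔ k = (e ⟨v, h⟩ : ℕ) := by
        constructor
        · intro hv
          have := hsu v hv
          subst this
          rfl
        · intro hk'
          have : s = v := congrArg Subtype.val (e.injective (Fin.ext hk'))
          exact this ▸ hs
      rw [e1]
      simp [treeB, hlt]
    refine ⟨Function.update p (n + 1) k, ?_, Equiv.ofBijective f fbij, ?_⟩
    · intro j hj
      by_cases h : j = n + 1
      · subst h; simpa using hk
      · simpa [Function.update_of_ne h] using hp j hj
    · intro u v
      simp only [Equiv.ofBijective_apply]
      rcases cases' u with rfl | hu <;> rcases cases' v with rfl | hv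
      · simp [treeB]
      · exact hlast v hv
      · rw [T.adj_comm, treeB_symm]; exact hlast u hu
      · have := he ⟨u, hu⟩ ⟨v, hv⟩
        rw [fu u hu, fu v hv]
        simp only [SimpleGraph.comap_adj, Function.Embedding.subtype_apply] at this
        rw [this]
        have h1 := (e ⟨u, hu⟩).2.ne
        have h2 := (e ⟨v, hv⟩).2.ne
        simp only [treeB, Fin.val_castSucc, Function.update_of_ne h1, Function.update_of_ne h2]

theorem fin3 : ((List.range 2).all fun a => !(existsQB 3 (treeB (pf a 0 0 0)))) = true := by
  decide +kernel
theorem fin4 : ((List.range 2).all fun a => (List.range 3).all fun b =>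
    !(existsQB 4 (treeB (pf a b 0 0))) || isoB 4 (treeB (pf a b 0 0)) starB) = true := by
  decide +kernel
theorem fin5 : ((List.range 2).all fun a => (List.range 3).all fun b => (List.range 4).all fun c =>
    !(existsQB 5 (treeB (pf a b c 0))) || isoB 5 (treeB (pf a b c 0)) pathB
     || isoB 5 (treeB (pf a b c 0)) dsB) = true := by
  decide +kernel
theorem fin6 : ((List.range 2).all fun a => (List.range 3).all fun b => (List.range 4).all fun c =>
    (List.range 5).all fun d =>
    !(existsQB 6 (treeB (pf a b c d))) || isoB 6 (treeB (pf a b c d)) pathB) = true := by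
  decide +kernel

theorem pos_star : existsQB 4 starB = true ∧ RB 4 starB = false := by decide +kernel
theorem pos_p5 : existsQB 5 pathB = true ∧ RB 5 pathB = false := by decide +kernel
theorem pos_p6 : existsQB 6 pathB = true ∧ RB 6 pathB = false := by decide +kernel
theorem pos_ds : existsQB 5 dsB = true ∧ RB 5 dsB = false := by decide +kernel

theorem treeB_congr {n : ℕ} {p q : ℕ → ℕ} (h : ∀ j, 0 < j → j < n → p j = q j) (i j : Fin n) :
    treeB p i j = treeB q i j := by
  rw [Bool.eq_iff_iff]
  simp only [treeB, Bool.or_eq_true, Bool.and_eq_true, Nat.blt_eq, beq_iff_eq]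
  have h1 := h i
  have h2 := h j
  have := i.2
  have := j.2
  grind

theorem path_adj_iff (n : ℕ) (i j : Fin n) :
    (SimpleGraph.pathGraph n).Adj i j ↔ pathB i j = true := by
  simp [SimpleGraph.pathGraph_adj, pathB]

theorem star_adj_iff (n : ℕ) (i j : Fin n) : (starGraph n).Adj i j ↔ starB i j = true := by
  simp [starGraph, starB, Fin.ext_iff]; tauto

def dsFun : Fin 1 ⊕ Fin 2 ⊕ Fin 2 → Fin 5
  | Sum.inl _ => 0
  | Sum.inr (Sum.inl 0) => 1
  | Sum.inr (Sum.inl 1) => 2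
  | Sum.inr (Sum.inr 0) => 3
  | Sum.inr (Sum.inr 1) => 4

noncomputable def dsEquiv : Fin 1 ⊕ Fin 2 ⊕ Fin 2 ≃ Fin 5 :=
  Equiv.ofBijective dsFun (by decide)

theorem ds_adj_iff (u v : Fin 1 ⊕ Fin 2 ⊕ Fin 2) :
    (doubleStar 1 2).Adj u v ↔ dsB (dsEquiv u) (dsEquiv v) = true := by
  simp only [dsEquiv, Equiv.ofBijective_apply, doubleStar, SimpleGraph.fromRel_adj]
  rcases u with u | u | u <;> rcases v with v | v | v <;> fin_cases u <;> fin_cases v <;>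
    simp [dsFun, dsB]

noncomputable def dsGraph : SimpleGraph (Fin 5) := (doubleStar 1 2).comap dsEquiv.symm

theorem dsGraph_adj (i j : Fin 5) : dsGraph.Adj i j ↔ dsB i j = true := by
  simp [dsGraph, ds_adj_iff]

noncomputable def dsIso : dsGraph ≃g doubleStar 1 2 := ⟨dsEquiv.symm, by simp [dsGraph]⟩

theorem reverse_dir {V : Type*} [Fintype V] {T : SimpleGraph V} {n : ℕ}
    {H : SimpleGraph (Fin n)} {Hb : ℕ → ℕ → Bool} (i : T ≃g H)
    (hH : ∀ i j : Fin n, H.Adj i j ↔ Hb i j = true)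
    (h : existsQB n Hb = true ∧ RB n Hb = false) : IC T = Fintype.card V - 1 := by
  have hG : ∀ u v, T.Adj u v ↔ Hb (i.toEquiv u) (i.toEquiv v) = true := by
    intro u v
    rw [← hH]
    exact i.map_adj_iff.symm
  refine IC_pred_of ((exQ_iff i.toEquiv hG).2 h.1) ?_
  rw [R_iff i.toEquiv hG, h.2]
  simp

theorem stmt_19 {V : Type*} [Fintype V] (T : SimpleGraph V) (n : ℕ)
    (hn : Fintype.card V = n) (hT : T.IsTree) :
    IC T = n - 1 ↔
      (Nonempty (T ≃g SimpleGraph.pathGraph 5) ∨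
       Nonempty (T ≃g SimpleGraph.pathGraph 6) ∨
       Nonempty (T ≃g doubleStar 1 2) ∨
       Nonempty (T ≃g starGraph 4)) := by
  subst hn
  constructor
  · intro h
    by_cases h2 : 2 ≤ Fintype.card V
    swap
    · exfalso
      have := hT.connected.nonempty
      have hp : 0 < Fintype.card V := Fintype.card_pos
      have h1 : Fintype.card V = 1 := by omega
      exact IC_one (T := T) h1 (by rw [h]; omega)
    have hQ := Q_of_IC h2 h
    have h6 : Fintype.card V ≤ 6 := by
      obtain ⟨x, y, hQ⟩ := hQ
      exact card_le_six hT hQ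
    have h3 : 3 ≤ Fintype.card V := by
      obtain ⟨x, y, hxy, -, ⟨z, hzx, hzy, -⟩, -⟩ := hQ
      exact Fintype.two_lt_card_iff.2 ⟨x, y, z, hxy, hzx.symm, hzy.symm⟩
    obtain ⟨n, hn⟩ : ∃ n, Fintype.card V = n := ⟨_, rfl⟩
    obtain ⟨p, hp, e, he⟩ := encode n T hT hn
    rw [hn] at h3 h6
    have p1 : p 1 = 0 := by have := hp 1 (by norm_num); omega
    have p2 := hp 2 (by norm_num)
    have p3 := hp 3 (by norm_num)
    have p4 := hp 4 (by norm_num)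
    have p5 := hp 5 (by norm_num)
    clear h hT hn
    obtain rfl | rfl | rfl | rfl : n = 3 ∨ n = 4 ∨ n = 5 ∨ n = 6 := by omega
    · exfalso
      have he' : ∀ u v, T.Adj u v ↔ treeB (pf (p 2) 0 0 0) (e u) (e v) = true := by
        intro u v
        rw [he, treeB_congr]
        intro j h0 hj
        interval_cases j <;> simp [pf, p1]
      have hf := fin3
      simp only [List.all_eq_true, List.mem_range] at hf
      have hf := hf _ p2
      rw [(exQ_iff e he').1 hQ] at hf
      simp at hf
    · have he' : ∀ u v, T.Adj u v ↔ treeB (pf (p 2) (p 3) 0 0) (e u) (e v) = true := by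
        intro u v
        rw [he, treeB_congr]
        intro j h0 hj
        interval_cases j <;> simp [pf, p1]
      have hf := fin4
      simp only [List.all_eq_true, List.mem_range] at hf
      have hf := hf _ p2 _ p3
      rw [(exQ_iff e he').1 hQ, Bool.not_true, Bool.false_or] at hf
      exact Or.inr (Or.inr (Or.inr (iso_of_isoB e he' (star_adj_iff 4) hf)))
    · have he' : ∀ u v, T.Adj u v ↔ treeB (pf (p 2) (p 3) (p 4) 0) (e u) (e v) = true := by
        intro u v
        rw [he, treeB_congr]
        intro j h0 hj
        interval_cases j <;> simp [pf, p1]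
      have hf := fin5
      simp only [List.all_eq_true, List.mem_range] at hf
      have hf := hf _ p2 _ p3 _ p4
      rw [(exQ_iff e he').1 hQ, Bool.not_true, Bool.false_or, Bool.or_eq_true] at hf
      rcases hf with hf | hf
      · exact Or.inl (iso_of_isoB e he' (path_adj_iff 5) hf)
      · obtain ⟨i⟩ := iso_of_isoB e he' dsGraph_adj hf
        exact Or.inr (Or.inr (Or.inl ⟨i.trans dsIso⟩))
    · have he' : ∀ u v, T.Adj u v ↔ treeB (pf (p 2) (p 3) (p 4) (p 5)) (e u) (e v) = true := by
        intro u v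
        rw [he, treeB_congr]
        intro j h0 hj
        interval_cases j <;> simp [pf, p1]
      have hf := fin6
      simp only [List.all_eq_true, List.mem_range] at hf
      have hf := hf _ p2 _ p3 _ p4 _ p5
      rw [(exQ_iff e he').1 hQ, Bool.not_true, Bool.false_or] at hf
      exact Or.inr (Or.inl (iso_of_isoB e he' (path_adj_iff 6) hf))
  · rintro (⟨⟨i⟩⟩ | ⟨⟨i⟩⟩ | ⟨⟨i⟩⟩ | ⟨⟨i⟩⟩)
    · exact reverse_dir i (path_adj_iff 5) pos_p5
    · exact reverse_dir i (path_adj_iff 6) pos_p6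
    · exact reverse_dir (i.trans dsIso.symm) dsGraph_adj pos_ds
    · exact reverse_dir i (star_adj_iff 4) pos_star

end ICNL
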